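/- Let Ω ⊆ ℝ^d be a bounded open set, 0 ≤ θ ≤ 1, and let A : Ω → Sym_d(ℝ), b : Ω → ℝ^d, c : Ω → [0,∞) be measurable and essentially bounded. For smooth compactly supported φ, φ′ : ℝ^d → ℝ and ψ, ψ′ : ℝ^d → ℝ^d and square-integrable measurable Ξ, Ξ′ : Ω → Sym_d(ℝ), define a_θ((φ,ψ,Ξ),(φ′,ψ′,Ξ′)) := ∫_Ω (∇φ−ψ)·(∇φ′−ψ′) + ∫_Ω ⟨Dψ−Ξ, Dψ′−Ξ′⟩_F + (1/2)∫_Ω ⟨Dψ−Dψᵀ, Dψ′−Dψ′ᵀ⟩_F + ∫_Ω L_θ(φ,ψ,Ξ)·L_θ(φ′,ψ′,Ξ′). Then |a_θ((φ,ψ,Ξ),(φ′,ψ′,Ξ′))| ≤ C·‖(φ,ψ,Ξ)‖_Y·‖(φ′,ψ′,Ξ′)‖_Y, where C = 5·( max( ‖c‖_{L^∞}, 1 + d(1−θ)‖b‖_{L^∞}, 1 + dθ‖b‖_{L^∞}, 1 + √2, 1 + d²‖A‖_{L^∞} ) )². -/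

import Mathlib

/-!
The form is a sum of products, so the elementary inequality `2 t x y ≤ t² x² + y²`, applied to every
product and integrated, gives `2 t a(u, u') ≤ t² a(u, u) + a(u', u')` for every real `t`, without
any linearity of `a`. Pointwise almost everywhere the integrand of `a(u, u)` is at most `5 M²` times
the density of `‖u‖²_Y`, where `M` is the maximum in the statement (`density_le`): the first three
terms cost at most a factor `4` on each component, and Cauchy-Schwarz together with
`(p + q + r + s)² ≤ 4 (p² + q² + r² + s²)` bounds `L_θ²` (`Ltheta_sq_le`). Hence
`2 t a(u, u') ≤ 5 M² (t² ‖u‖²_Y + ‖u'‖²_Y)` for all real `t`, and nonpositivity of the discriminant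
in `t` is the claim.

All integrals involved converge because every component lies in `L²(Ω)` and the coefficients are
essentially bounded.
-/


open MeasureTheory Matrix Finset Bornology

noncomputable section

/-- Frobenius inner product of two real `d × d` matrices. -/
def frobInner {d : ℕ} (M N : Matrix (Fin d) (Fin d) ℝ) : ℝ :=
  ∑ i, ∑ j, M i j * N i j

/-- Squared Frobenius norm of a real `d × d` matrix. -/
def frobSq {d : ℕ} (M : Matrix (Fin d) (Fin d) ℝ) : ℝ := frobInner M M

/-- Squared Euclidean norm of a vector in `ℝ^d`. -/
def vecSq {d : ℕ} (v : Fin d → ℝ) : ℝ := ∑ i, v i ^ 2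

/-- Jacobian matrix of a vector field `ψ : ℝ^d → ℝ^d`, `(jac ψ x) i j = ∂_j ψ_i (x)`. -/
def jac {d : ℕ} (ψ : (Fin d → ℝ) → (Fin d → ℝ)) (x : Fin d → ℝ) :
    Matrix (Fin d) (Fin d) ℝ :=
  Matrix.of fun i j => fderiv ℝ ψ x (Pi.single j 1) i

/-- Gradient of a scalar field `φ : ℝ^d → ℝ`. -/
def grad' {d : ℕ} (φ : (Fin d → ℝ) → ℝ) (x : Fin d → ℝ) : Fin d → ℝ :=
  fun i => fderiv ℝ φ x (Pi.single i 1)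

/-- Divergence of a vector field `ψ : ℝ^d → ℝ^d`. -/
def divg {d : ℕ} (ψ : (Fin d → ℝ) → (Fin d → ℝ)) (x : Fin d → ℝ) : ℝ :=
  ∑ i, jac ψ x i i

/-- Hessian matrix of a scalar field `u : ℝ^d → ℝ`. -/
def hess {d : ℕ} (u : (Fin d → ℝ) → ℝ) (x : Fin d → ℝ) : Matrix (Fin d) (Fin d) ℝ :=
  jac (grad' u) x

/-- The operator `L_θ(φ, ψ, Ξ) := A : Ξ + b·(θψ + (1−θ)∇φ) − cφ` evaluated at `x`. -/
def Ltheta {d : ℕ} (A : (Fin d → ℝ) → Matrix (Fin d) (Fin d) ℝ)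
    (b : (Fin d → ℝ) → Fin d → ℝ) (c : (Fin d → ℝ) → ℝ) (θ : ℝ)
    (φ : (Fin d → ℝ) → ℝ) (ψ : (Fin d → ℝ) → (Fin d → ℝ))
    (Ξ : (Fin d → ℝ) → Matrix (Fin d) (Fin d) ℝ) (x : Fin d → ℝ) : ℝ :=
  frobInner (A x) (Ξ x)
    + (∑ i, b x i * (θ * ψ x i + (1 - θ) * grad' φ x i)) - c x * φ x

/-! ### Pointwise inequalities -/

lemma frobSq_eq {d : ℕ} (M : Matrix (Fin d) (Fin d) ℝ) : frobSq M = ∑ i, ∑ j, M i j ^ 2 := by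
  simp [frobSq, frobInner, sq]

lemma frobSq_nonneg' {d : ℕ} (M : Matrix (Fin d) (Fin d) ℝ) : 0 ≤ frobSq M := by
  rw [frobSq_eq]; positivity

lemma vecSq_nonneg' {d : ℕ} (v : Fin d → ℝ) : 0 ≤ vecSq v := by
  unfold vecSq; positivity

lemma frobInner_sq_le {d : ℕ} (M N : Matrix (Fin d) (Fin d) ℝ) :
    frobInner M N ^ 2 ≤ frobSq M * frobSq N := by
  rw [frobSq_eq, frobSq_eq, frobInner]
  simp only [← Finset.sum_product']
  exact Finset.sum_mul_sq_le_sq_mul_sq _ _ _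

lemma two_mul_vec_le {d : ℕ} (t : ℝ) (v w : Fin d → ℝ) :
    2 * t * ∑ i, v i * w i ≤ t ^ 2 * vecSq v + vecSq w := by
  unfold vecSq
  rw [Finset.mul_sum, Finset.mul_sum, ← Finset.sum_add_distrib]
  exact Finset.sum_le_sum fun i _ => by nlinarith [sq_nonneg (t * v i - w i)]

lemma two_mul_frobInner_le {d : ℕ} (t : ℝ) (M N : Matrix (Fin d) (Fin d) ℝ) :
    2 * t * frobInner M N ≤ t ^ 2 * frobSq M + frobSq N := by
  rw [frobSq_eq, frobSq_eq, frobInner, Finset.mul_sum, Finset.mul_sum, ← Finset.sum_add_distrib]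
  exact Finset.sum_le_sum fun i _ => two_mul_vec_le t (M i) (N i)

lemma vecSq_sub_le {d : ℕ} (v w : Fin d → ℝ) :
    vecSq (fun i => v i - w i) ≤ 2 * vecSq v + 2 * vecSq w := by
  unfold vecSq
  rw [Finset.mul_sum, Finset.mul_sum, ← Finset.sum_add_distrib]
  exact Finset.sum_le_sum fun i _ => by nlinarith [sq_nonneg (v i + w i)]

lemma frobSq_sub_le {d : ℕ} (M N : Matrix (Fin d) (Fin d) ℝ) :
    frobSq (M - N) ≤ 2 * frobSq M + 2 * frobSq N := by
  rw [frobSq_eq, frobSq_eq, frobSq_eq, Finset.mul_sum, Finset.mul_sum, ← Finset.sum_add_distrib]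
  exact Finset.sum_le_sum fun i _ => vecSq_sub_le (M i) (N i)

lemma frobSq_transpose {d : ℕ} (M : Matrix (Fin d) (Fin d) ℝ) : frobSq Mᵀ = frobSq M := by
  rw [frobSq_eq, frobSq_eq, Finset.sum_comm]; rfl

/-- A bound on a Euclidean or Frobenius norm survives the dimensional factor `d ^ k`; for `d = 0`
both sides vanish, whatever the sign of `β`. -/
lemma le_dim_pow_mul {d : ℕ} (k : ℕ) (hk : k ≠ 0) {s β : ℝ} (h0 : 0 ≤ s) (hd : d = 0 → s = 0)
    (h : s ≤ β) : s ≤ (d : ℝ) ^ k * β := by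
  rcases Nat.eq_zero_or_pos d with rfl | hpos
  · simp [hd rfl, hk]
  · have h1 : (1 : ℝ) ≤ (d : ℝ) ^ k := one_le_pow₀ (by exact_mod_cast hpos)
    nlinarith

lemma Ltheta_sq_le {d : ℕ} {A : (Fin d → ℝ) → Matrix (Fin d) (Fin d) ℝ}
    {b : (Fin d → ℝ) → Fin d → ℝ} {c : (Fin d → ℝ) → ℝ} {θ : ℝ}
    (φ : (Fin d → ℝ) → ℝ) (ψ : (Fin d → ℝ) → (Fin d → ℝ))
    (Ξ : (Fin d → ℝ) → Matrix (Fin d) (Fin d) ℝ) (x : Fin d → ℝ) {m M : ℝ}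
    (hA : frobSq (A x) ≤ m ^ 2) (hb : θ ^ 2 * vecSq (b x) ≤ m ^ 2)
    (hb' : (1 - θ) ^ 2 * vecSq (b x) ≤ m ^ 2) (hc : c x ^ 2 ≤ M ^ 2) :
    Ltheta A b c θ φ ψ Ξ x ^ 2 ≤ 4 * (m ^ 2 * frobSq (Ξ x) + m ^ 2 * vecSq (ψ x)
      + m ^ 2 * vecSq (grad' φ x) + M ^ 2 * φ x ^ 2) := by
  have e : Ltheta A b c θ φ ψ Ξ x = frobInner (A x) (Ξ x) + θ * (∑ i, b x i * ψ x i)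
      + (1 - θ) * (∑ i, b x i * grad' φ x i) - c x * φ x := by
    unfold Ltheta
    rw [Finset.mul_sum, Finset.mul_sum, add_assoc (frobInner _ _), ← Finset.sum_add_distrib]
    congr 2
    exact Finset.sum_congr rfl fun i _ => by ring
  have h1 : frobInner (A x) (Ξ x) ^ 2 ≤ m ^ 2 * frobSq (Ξ x) :=
    (frobInner_sq_le _ _).trans (mul_le_mul_of_nonneg_right hA (frobSq_nonneg' _))
  have h2 : (θ * ∑ i, b x i * ψ x i) ^ 2 ≤ m ^ 2 * vecSq (ψ x) := by
    have h := Finset.sum_mul_sq_le_sq_mul_sq Finset.univ (b x) (ψ x)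
    calc _ = θ ^ 2 * (∑ i, b x i * ψ x i) ^ 2 := by ring
      _ ≤ θ ^ 2 * (vecSq (b x) * vecSq (ψ x)) := mul_le_mul_of_nonneg_left h (sq_nonneg _)
      _ = θ ^ 2 * vecSq (b x) * vecSq (ψ x) := by ring
      _ ≤ _ := mul_le_mul_of_nonneg_right hb (vecSq_nonneg' _)
  have h3 : ((1 - θ) * ∑ i, b x i * grad' φ x i) ^ 2 ≤ m ^ 2 * vecSq (grad' φ x) := by
    have h := Finset.sum_mul_sq_le_sq_mul_sq Finset.univ (b x) (grad' φ x)
    calc _ = (1 - θ) ^ 2 * (∑ i, b x i * grad' φ x i) ^ 2 := by ring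
      _ ≤ (1 - θ) ^ 2 * (vecSq (b x) * vecSq (grad' φ x)) :=
        mul_le_mul_of_nonneg_left h (sq_nonneg _)
      _ = (1 - θ) ^ 2 * vecSq (b x) * vecSq (grad' φ x) := by ring
      _ ≤ _ := mul_le_mul_of_nonneg_right hb' (vecSq_nonneg' _)
  have h4 : (c x * φ x) ^ 2 ≤ M ^ 2 * φ x ^ 2 := by
    rw [mul_pow]; exact mul_le_mul_of_nonneg_right hc (sq_nonneg _)
  rw [e]
  generalize frobInner (A x) (Ξ x) = p at *
  generalize θ * (∑ i, b x i * ψ x i) = q at *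
  generalize (1 - θ) * (∑ i, b x i * grad' φ x i) = r at *
  generalize c x * φ x = s at *
  nlinarith [sq_nonneg (p - q), sq_nonneg (p - r), sq_nonneg (p + s), sq_nonneg (q - r),
    sq_nonneg (q + s), sq_nonneg (r + s)]

/-- The density of the squared norm `‖(φ, ψ, Ξ)‖²_Y`. -/
def normDensity {d : ℕ} (φ : (Fin d → ℝ) → ℝ) (ψ : (Fin d → ℝ) → (Fin d → ℝ))
    (Ξ : (Fin d → ℝ) → Matrix (Fin d) (Fin d) ℝ) (x : Fin d → ℝ) : ℝ :=
  ((φ x ^ 2 + vecSq (grad' φ x)) + (vecSq (ψ x) + frobSq (jac ψ x))) + frobSq (Ξ x)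

/-- Pointwise upper bound for the integrand on the diagonal of the form. The bound is stated with `1 + m`
in place of the maximum `M` of the constant, where `m = M - 1`. -/
lemma density_le {d : ℕ} {A : (Fin d → ℝ) → Matrix (Fin d) (Fin d) ℝ}
    {b : (Fin d → ℝ) → Fin d → ℝ} {c : (Fin d → ℝ) → ℝ} {θ : ℝ}
    (φ : (Fin d → ℝ) → ℝ) (ψ : (Fin d → ℝ) → (Fin d → ℝ))
    (Ξ : (Fin d → ℝ) → Matrix (Fin d) (Fin d) ℝ) (x : Fin d → ℝ) {m : ℝ} (hm : 0 ≤ m)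
    (hA : frobSq (A x) ≤ m ^ 2) (hb : θ ^ 2 * vecSq (b x) ≤ m ^ 2)
    (hb' : (1 - θ) ^ 2 * vecSq (b x) ≤ m ^ 2) (hc : c x ^ 2 ≤ (1 + m) ^ 2) :
    vecSq (fun i => grad' φ x i - ψ x i) + frobSq (jac ψ x - Ξ x)
      + (1 / 2 : ℝ) * frobSq (jac ψ x - (jac ψ x)ᵀ) + Ltheta A b c θ φ ψ Ξ x ^ 2
      ≤ 5 * (1 + m) ^ 2 * normDensity φ ψ Ξ x := by
  have h1 := vecSq_sub_le (grad' φ x) (ψ x)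
  have h2 := frobSq_sub_le (jac ψ x) (Ξ x)
  have h3 := frobSq_sub_le (jac ψ x) (jac ψ x)ᵀ
  rw [frobSq_transpose] at h3
  have h4 := Ltheta_sq_le φ ψ Ξ x hA hb hb' hc
  have hg := vecSq_nonneg' (grad' φ x)
  have hp := vecSq_nonneg' (ψ x)
  have hJ := frobSq_nonneg' (jac ψ x)
  have hX := frobSq_nonneg' (Ξ x)
  have hf := sq_nonneg (φ x)
  unfold normDensity
  generalize vecSq (grad' φ x) = g at *
  generalize vecSq (ψ x) = p at *
  generalize frobSq (jac ψ x) = J at *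
  generalize frobSq (Ξ x) = X at *
  generalize φ x ^ 2 = f at *
  have k : 2 + 4 * m ^ 2 ≤ 5 * (1 + m) ^ 2 := by nlinarith
  have k' : 4 ≤ 5 * (1 + m) ^ 2 := by nlinarith
  nlinarith [mul_le_mul_of_nonneg_right k hg, mul_le_mul_of_nonneg_right k hp,
    mul_le_mul_of_nonneg_right k hX, mul_le_mul_of_nonneg_right k' hJ,
    mul_nonneg (sq_nonneg (1 + m)) hf]

lemma abs_le_of_forall_quadratic {a K Y Z : ℝ} (hK : 0 ≤ K) (hY : 0 ≤ Y)
    (h : ∀ t : ℝ, 2 * t * a ≤ t ^ 2 * (K * Y) + K * Z) : |a| ≤ K * √Y * √Z := by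
  have hd : discrim (K * Y) (-2 * a) (K * Z) ≤ 0 :=
    discrim_le_zero fun t => by nlinarith [h t]
  unfold discrim at hd
  rw [mul_assoc, ← Real.sqrt_mul hY, ← Real.sqrt_sq hK, ← Real.sqrt_mul (sq_nonneg K)]
  exact Real.abs_le_sqrt (by nlinarith)

/-! ### Square integrability of the components -/

lemma memLp_of_sq_le {X : Type*} [MeasurableSpace X] {μ : Measure X} {f g : X → ℝ}
    (hf : Measurable f) (hg : Integrable g μ) (h : ∀ x, f x ^ 2 ≤ g x) : MemLp f 2 μ := by
  rw [memLp_two_iff_integrable_sq hf.aestronglyMeasurable]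
  refine hg.mono' (hf.pow_const 2).aestronglyMeasurable (.of_forall fun x => ?_)
  rw [Real.norm_of_nonneg (sq_nonneg _)]
  exact h x

lemma memLp_entry {d : ℕ} {μ : Measure (Fin d → ℝ)} {Ξ : (Fin d → ℝ) → Matrix (Fin d) (Fin d) ℝ}
    (hm : ∀ i j, Measurable fun x => Ξ x i j) (hL : Integrable (fun x => frobSq (Ξ x)) μ)
    (i j : Fin d) : MemLp (fun x => Ξ x i j) 2 μ := by
  refine memLp_of_sq_le (hm i j) hL fun x => ?_
  rw [frobSq_eq]
  calc Ξ x i j ^ 2 ≤ ∑ j, Ξ x i j ^ 2 :=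
        Finset.single_le_sum (f := fun j => Ξ x i j ^ 2) (fun _ _ => sq_nonneg _)
          (Finset.mem_univ j)
    _ ≤ _ := Finset.single_le_sum (f := fun i => ∑ j, Ξ x i j ^ 2)
          (fun _ _ => Finset.sum_nonneg fun _ _ => sq_nonneg _) (Finset.mem_univ i)

lemma memLp_coeff_mul {X : Type*} [MeasurableSpace X] {μ : Measure X} {a f : X → ℝ} {C : ℝ}
    (ha : Measurable a) (hC : ∀ᵐ x ∂μ, |a x| ≤ C) (hf : MemLp f 2 μ) :
    MemLp (fun x => a x * f x) 2 μ :=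
  MemLp.mul' (p := ⊤) (q := 2) hf (memLp_top_of_bound ha.aestronglyMeasurable C hC)

section Smooth

variable {d : ℕ} {μ : Measure (Fin d → ℝ)} [IsFiniteMeasureOnCompacts μ]

lemma memLp_grad {φ : (Fin d → ℝ) → ℝ} (hφ : ContDiff ℝ (⊤ : ℕ∞) φ) (hs : HasCompactSupport φ)
    (i : Fin d) : MemLp (fun x => grad' φ x i) 2 μ := by
  have hc : Continuous fun x => fderiv ℝ φ x (Pi.single i 1) :=
    (hφ.continuous_fderiv (by simp)).clm_apply continuous_const
  exact hc.memLp_of_hasCompactSupport (hs.fderiv_apply ℝ (Pi.single i 1))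

lemma memLp_comp {ψ : (Fin d → ℝ) → (Fin d → ℝ)} (hψ : ContDiff ℝ (⊤ : ℕ∞) ψ)
    (hs : HasCompactSupport ψ) (i : Fin d) : MemLp (fun x => ψ x i) 2 μ :=
  ((continuous_apply i).comp hψ.continuous).memLp_of_hasCompactSupport
    (hs.comp_left (g := fun v : Fin d → ℝ => v i) rfl)

lemma memLp_jac {ψ : (Fin d → ℝ) → (Fin d → ℝ)} (hψ : ContDiff ℝ (⊤ : ℕ∞) ψ)
    (hs : HasCompactSupport ψ) (i j : Fin d) : MemLp (fun x => jac ψ x i j) 2 μ := by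
  have hc : Continuous fun x => fderiv ℝ ψ x (Pi.single j 1) :=
    (hψ.continuous_fderiv (by simp)).clm_apply continuous_const
  exact ((continuous_apply i).comp hc).memLp_of_hasCompactSupport
    ((hs.fderiv_apply ℝ (Pi.single j 1)).comp_left (g := fun v : Fin d → ℝ => v i) rfl)

end Smooth

lemma integrable_frobInner {d : ℕ} {μ : Measure (Fin d → ℝ)}
    {F G : (Fin d → ℝ) → Matrix (Fin d) (Fin d) ℝ} (hF : ∀ i j, MemLp (fun x => F x i j) 2 μ)
    (hG : ∀ i j, MemLp (fun x => G x i j) 2 μ) :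
    Integrable (fun x => frobInner (F x) (G x)) μ :=
  integrable_finsetSum _ fun i _ => integrable_finsetSum _ fun j _ =>
    (hF i j).integrable_mul (hG i j)

lemma integrable_vecSq {d : ℕ} {μ : Measure (Fin d → ℝ)}
    {F : (Fin d → ℝ) → Fin d → ℝ} (hF : ∀ i, MemLp (fun x => F x i) 2 μ) :
    Integrable (fun x => vecSq (F x)) μ :=
  integrable_finsetSum _ fun i _ => (hF i).integrable_sq

lemma memLp_Ltheta {d : ℕ} {μ : Measure (Fin d → ℝ)}
    {A : (Fin d → ℝ) → Matrix (Fin d) (Fin d) ℝ} (hAmeas : ∀ i j, Measurable fun x => A x i j)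
    {b : (Fin d → ℝ) → Fin d → ℝ} (hbmeas : ∀ i, Measurable fun x => b x i)
    {c : (Fin d → ℝ) → ℝ} (hcmeas : Measurable c) {αbd βbd cbd : ℝ} (θ : ℝ)
    (hAbdd : ∀ᵐ x ∂μ, √(frobSq (A x)) ≤ αbd) (hbbdd : ∀ᵐ x ∂μ, √(vecSq (b x)) ≤ βbd)
    (hcbdd : ∀ᵐ x ∂μ, |c x| ≤ cbd)
    {φ : (Fin d → ℝ) → ℝ} {ψ : (Fin d → ℝ) → (Fin d → ℝ)}
    {Ξ : (Fin d → ℝ) → Matrix (Fin d) (Fin d) ℝ} (hφ : MemLp φ 2 μ)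
    (hg : ∀ i, MemLp (fun x => grad' φ x i) 2 μ) (hψ : ∀ i, MemLp (fun x => ψ x i) 2 μ)
    (hΞ : ∀ i j, MemLp (fun x => Ξ x i j) 2 μ) :
    MemLp (Ltheta A b c θ φ ψ Ξ) 2 μ := by
  have hA : ∀ i j, ∀ᵐ x ∂μ, |A x i j| ≤ αbd := fun i j => by
    filter_upwards [hAbdd] with x hx
    refine (Real.abs_le_sqrt ?_).trans hx
    rw [frobSq_eq]
    exact (Finset.single_le_sum (f := fun j => A x i j ^ 2) (fun _ _ => sq_nonneg _)
      (Finset.mem_univ j)).trans (Finset.single_le_sum (f := fun i => ∑ j, A x i j ^ 2)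
        (fun _ _ => Finset.sum_nonneg fun _ _ => sq_nonneg _) (Finset.mem_univ i))
  have hb : ∀ i, ∀ᵐ x ∂μ, |b x i| ≤ βbd := fun i => by
    filter_upwards [hbbdd] with x hx
    exact (Real.abs_le_sqrt (Finset.single_le_sum (f := fun i => b x i ^ 2)
      (fun _ _ => sq_nonneg _) (Finset.mem_univ i))).trans hx
  refine MemLp.sub (MemLp.add ?_ ?_) (memLp_coeff_mul hcmeas hcbdd hφ)
  · exact memLp_finsetSum _ fun i _ => memLp_finsetSum _ fun j _ =>
      memLp_coeff_mul (hAmeas i j) (hA i j) (hΞ i j)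
  · exact memLp_finsetSum _ fun i _ => memLp_coeff_mul (hbmeas i) (hb i)
      (((hψ i).const_mul θ).add ((hg i).const_mul (1 - θ)))

/-! ### The continuity estimate -/

/-- **continuity of the bilinear form `a_θ`.**
`|a_θ((φ,ψ,Ξ),(φ′,ψ′,Ξ′))| ≤ C·‖(φ,ψ,Ξ)‖_Y·‖(φ′,ψ′,Ξ′)‖_Y` with
`C = 5·(max(‖c‖_∞, 1 + d(1−θ)‖b‖_∞, 1 + dθ‖b‖_∞, 1 + √2, 1 + d²‖A‖_∞))²`, where
`‖(φ,ψ,Ξ)‖²_Y = ‖φ‖²_{H¹} + ‖ψ‖²_{H¹} + ∫ ‖Ξ‖_F²`. -/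
theorem continuity_a_theta
    {d : ℕ} (Ω : Set (Fin d → ℝ)) (hΩ : IsOpen Ω) (hbdΩ : IsBounded Ω)
    (θ : ℝ) (hθ : θ ∈ Set.Icc (0 : ℝ) 1)
    (A : (Fin d → ℝ) → Matrix (Fin d) (Fin d) ℝ)
    (hAmeas : ∀ i j, Measurable fun x => A x i j)
    (hAsymm : ∀ x, (A x).IsSymm)
    (b : (Fin d → ℝ) → Fin d → ℝ) (hbmeas : ∀ i, Measurable fun x => b x i)
    (c : (Fin d → ℝ) → ℝ) (hcmeas : Measurable c) (hc : ∀ x, 0 ≤ c x)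
    (αbd βbd cbd : ℝ)
    (hAbdd : ∀ᵐ x ∂(volume.restrict Ω), Real.sqrt (frobSq (A x)) ≤ αbd)
    (hbbdd : ∀ᵐ x ∂(volume.restrict Ω), Real.sqrt (vecSq (b x)) ≤ βbd)
    (hcbdd : ∀ᵐ x ∂(volume.restrict Ω), |c x| ≤ cbd)
    (φ φ' : (Fin d → ℝ) → ℝ) (hφ : ContDiff ℝ (⊤ : ℕ∞) φ) (hφ' : ContDiff ℝ (⊤ : ℕ∞) φ')
    (hφsupp : HasCompactSupport φ) (hφsub : tsupport φ ⊆ Ω)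
    (hφ'supp : HasCompactSupport φ') (hφ'sub : tsupport φ' ⊆ Ω)
    (ψ ψ' : (Fin d → ℝ) → (Fin d → ℝ)) (hψ : ContDiff ℝ (⊤ : ℕ∞) ψ)
    (hψ' : ContDiff ℝ (⊤ : ℕ∞) ψ')
    (hψsupp : HasCompactSupport ψ) (hψsub : tsupport ψ ⊆ Ω)
    (hψ'supp : HasCompactSupport ψ') (hψ'sub : tsupport ψ' ⊆ Ω)
    (Ξ Ξ' : (Fin d → ℝ) → Matrix (Fin d) (Fin d) ℝ)
    (hΞmeas : ∀ i j, Measurable fun x => Ξ x i j)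
    (hΞ'meas : ∀ i j, Measurable fun x => Ξ' x i j)
    (hΞsymm : ∀ x, (Ξ x).IsSymm) (hΞ'symm : ∀ x, (Ξ' x).IsSymm)
    (hΞL2 : Integrable (fun x => frobSq (Ξ x)) (volume.restrict Ω))
    (hΞ'L2 : Integrable (fun x => frobSq (Ξ' x)) (volume.restrict Ω)) :
    |(∫ x in Ω, ∑ i, (grad' φ x i - ψ x i) * (grad' φ' x i - ψ' x i))
        + (∫ x in Ω, frobInner (jac ψ x - Ξ x) (jac ψ' x - Ξ' x))
        + (1 / 2 : ℝ)
          * (∫ x in Ω, frobInner (jac ψ x - (jac ψ x)ᵀ) (jac ψ' x - (jac ψ' x)ᵀ))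
        + (∫ x in Ω, Ltheta A b c θ φ ψ Ξ x * Ltheta A b c θ φ' ψ' Ξ' x)|
      ≤ (5 * (max cbd (max (1 + (d : ℝ) * (1 - θ) * βbd)
            (max (1 + (d : ℝ) * θ * βbd)
              (max (1 + Real.sqrt 2) (1 + (d : ℝ) ^ 2 * αbd))))) ^ 2)
        * Real.sqrt ((((∫ x in Ω, (φ x) ^ 2) + ∫ x in Ω, vecSq (grad' φ x))
              + ((∫ x in Ω, vecSq (ψ x)) + ∫ x in Ω, frobSq (jac ψ x)))
            + ∫ x in Ω, frobSq (Ξ x))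
        * Real.sqrt ((((∫ x in Ω, (φ' x) ^ 2) + ∫ x in Ω, vecSq (grad' φ' x))
              + ((∫ x in Ω, vecSq (ψ' x)) + ∫ x in Ω, frobSq (jac ψ' x)))
            + ∫ x in Ω, frobSq (Ξ' x)) := by
  set μ := volume.restrict Ω with hμ
  set M : ℝ := max cbd (max (1 + (d : ℝ) * (1 - θ) * βbd) (max (1 + (d : ℝ) * θ * βbd)
    (max (1 + Real.sqrt 2) (1 + (d : ℝ) ^ 2 * αbd)))) with hM
  obtain ⟨hθ0, hθ1⟩ := hθ
  have hMc : cbd ≤ M := by simp [hM]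
  have hMb' : 1 + (d : ℝ) * (1 - θ) * βbd ≤ M := by simp [hM]
  have hMb : 1 + (d : ℝ) * θ * βbd ≤ M := by simp [hM]
  have hM2 : 1 + √2 ≤ M := by simp [hM]
  have hMA : 1 + (d : ℝ) ^ 2 * αbd ≤ M := by simp [hM]
  clear_value M
  obtain ⟨m, rfl⟩ : ∃ m, M = 1 + m := ⟨M - 1, by ring⟩
  have hm : 0 ≤ m := by linarith [Real.sqrt_nonneg 2]
  -- Only `√(frobSq A) ≤ m` and `θ √(vecSq b), (1 - θ) √(vecSq b) ≤ m` are needed; the powers of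
  -- `d` in the constant are slack.
  have hcoef : ∀ᵐ x ∂μ, frobSq (A x) ≤ m ^ 2 ∧ θ ^ 2 * vecSq (b x) ≤ m ^ 2 ∧
      (1 - θ) ^ 2 * vecSq (b x) ≤ m ^ 2 ∧ c x ^ 2 ≤ (1 + m) ^ 2 := by
    filter_upwards [hAbdd, hbbdd, hcbdd] with x hAx hbx hcx
    have hA' := le_dim_pow_mul (d := d) 2 two_ne_zero (Real.sqrt_nonneg _)
      (by rintro rfl; simp [frobSq, frobInner]) hAx
    have hb' := le_dim_pow_mul (d := d) 1 one_ne_zero (Real.sqrt_nonneg _)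
      (by rintro rfl; simp [vecSq]) hbx
    rw [pow_one] at hb'
    have hs := Real.sq_sqrt (vecSq_nonneg' (b x))
    have hs0 := Real.sqrt_nonneg (vecSq (b x))
    refine ⟨?_, ?_, ?_, ?_⟩
    · exact (Real.sqrt_le_left hm).1 (by linarith)
    · rw [← hs, ← mul_pow]
      exact pow_le_pow_left₀ (by positivity) (by nlinarith) 2
    · rw [← hs, ← mul_pow]
      exact pow_le_pow_left₀ (mul_nonneg (by linarith) hs0) (by nlinarith) 2
    · exact sq_le_sq' (by linarith [neg_abs_le (c x)]) (by linarith [le_abs_self (c x)])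
  have mφ : MemLp φ 2 μ := hφ.continuous.memLp_of_hasCompactSupport hφsupp
  have mφ' : MemLp φ' 2 μ := hφ'.continuous.memLp_of_hasCompactSupport hφ'supp
  have mg := fun i => memLp_grad (μ := μ) hφ hφsupp i
  have mg' := fun i => memLp_grad (μ := μ) hφ' hφ'supp i
  have mψ := fun i => memLp_comp (μ := μ) hψ hψsupp i
  have mψ' := fun i => memLp_comp (μ := μ) hψ' hψ'supp i
  have mJ := fun i j => memLp_jac (μ := μ) hψ hψsupp i j
  have mJ' := fun i j => memLp_jac (μ := μ) hψ' hψ'supp i j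
  have mΞ := memLp_entry hΞmeas hΞL2
  have mΞ' := memLp_entry hΞ'meas hΞ'L2
  have mL := memLp_Ltheta hAmeas hbmeas hcmeas θ hAbdd hbbdd hcbdd mφ mg mψ mΞ
  have mL' := memLp_Ltheta hAmeas hbmeas hcmeas θ hAbdd hbbdd hcbdd mφ' mg' mψ' mΞ'
  have i1 : Integrable (fun x => ∑ i, (grad' φ x i - ψ x i) * (grad' φ' x i - ψ' x i)) μ :=
    integrable_finsetSum _ fun i _ => ((mg i).sub (mψ i)).integrable_mul ((mg' i).sub (mψ' i))
  have i2 : Integrable (fun x => frobInner (jac ψ x - Ξ x) (jac ψ' x - Ξ' x)) μ :=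
    integrable_frobInner (fun i j => (mJ i j).sub (mΞ i j)) fun i j => (mJ' i j).sub (mΞ' i j)
  have i3 : Integrable
      (fun x => frobInner (jac ψ x - (jac ψ x)ᵀ) (jac ψ' x - (jac ψ' x)ᵀ)) μ :=
    integrable_frobInner (fun i j => (mJ i j).sub (mJ j i)) fun i j => (mJ' i j).sub (mJ' j i)
  have i4 : Integrable (fun x => Ltheta A b c θ φ ψ Ξ x * Ltheta A b c θ φ' ψ' Ξ' x) μ :=
    mL.integrable_mul mL'
  have iJ : Integrable (fun x => frobSq (jac ψ x)) μ := integrable_frobInner mJ mJ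
  have iJ' : Integrable (fun x => frobSq (jac ψ' x)) μ := integrable_frobInner mJ' mJ'
  have ig := integrable_vecSq mg
  have ig' := integrable_vecSq mg'
  have ip := integrable_vecSq mψ
  have ip' := integrable_vecSq mψ'
  have iN : Integrable (normDensity φ ψ Ξ) μ :=
    ((mφ.integrable_sq.add ig).add (ip.add iJ)).add hΞL2
  have iN' : Integrable (normDensity φ' ψ' Ξ') μ :=
    ((mφ'.integrable_sq.add ig').add (ip'.add iJ')).add hΞ'L2
  have eN : ((∫ x, φ x ^ 2 ∂μ) + ∫ x, vecSq (grad' φ x) ∂μ)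
      + ((∫ x, vecSq (ψ x) ∂μ) + ∫ x, frobSq (jac ψ x) ∂μ) + ∫ x, frobSq (Ξ x) ∂μ
      = ∫ x, normDensity φ ψ Ξ x ∂μ := by
    rw [← integral_add' mφ.integrable_sq ig, ← integral_add' ip iJ,
      ← integral_add' (mφ.integrable_sq.add ig) (ip.add iJ),
      ← integral_add' ((mφ.integrable_sq.add ig).add (ip.add iJ)) hΞL2]
    rfl
  have eN' : ((∫ x, φ' x ^ 2 ∂μ) + ∫ x, vecSq (grad' φ' x) ∂μ)
      + ((∫ x, vecSq (ψ' x) ∂μ) + ∫ x, frobSq (jac ψ' x) ∂μ) + ∫ x, frobSq (Ξ' x) ∂μ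
      = ∫ x, normDensity φ' ψ' Ξ' x ∂μ := by
    rw [← integral_add' mφ'.integrable_sq ig', ← integral_add' ip' iJ',
      ← integral_add' (mφ'.integrable_sq.add ig') (ip'.add iJ'),
      ← integral_add' ((mφ'.integrable_sq.add ig').add (ip'.add iJ')) hΞ'L2]
    rfl
  have i12 := i1.add i2
  have i123 := i12.add (i3.const_mul (1 / 2 : ℝ))
  rw [eN, eN', ← integral_const_mul, ← integral_add' i1 i2,
    ← integral_add' i12 (i3.const_mul (1 / 2 : ℝ)), ← integral_add' i123 i4]
  refine abs_le_of_forall_quadratic (by positivity) (integral_nonneg fun x => ?_) fun t => ?_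
  · have := vecSq_nonneg' (grad' φ x)
    have := vecSq_nonneg' (ψ x)
    have := frobSq_nonneg' (jac ψ x)
    have := frobSq_nonneg' (Ξ x)
    simp only [Pi.zero_apply, normDensity]
    positivity
  · rw [← integral_const_mul, ← integral_const_mul, ← integral_const_mul, ← integral_const_mul,
      ← integral_add ((iN.const_mul _).const_mul _) (iN'.const_mul _)]
    refine integral_mono_ae ((i123.add i4).const_mul _)
      (((iN.const_mul _).const_mul _).add (iN'.const_mul _)) ?_
    filter_upwards [hcoef] with x hx
    obtain ⟨hA, hb, hb', hcx⟩ := hx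
    have k := density_le φ ψ Ξ x hm hA hb hb' hcx
    have k' := density_le φ' ψ' Ξ' x hm hA hb hb' hcx
    have j1 := two_mul_vec_le t (fun i => grad' φ x i - ψ x i) (fun i => grad' φ' x i - ψ' x i)
    have j2 := two_mul_frobInner_le t (jac ψ x - Ξ x) (jac ψ' x - Ξ' x)
    have j3 := two_mul_frobInner_le t (jac ψ x - (jac ψ x)ᵀ) (jac ψ' x - (jac ψ' x)ᵀ)
    have j4 := sq_nonneg (t * Ltheta A b c θ φ ψ Ξ x - Ltheta A b c θ φ' ψ' Ξ' x)
    have kt := mul_le_mul_of_nonneg_left k (sq_nonneg t)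
    simp only [Pi.add_apply]
    linarith
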